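/- Suppose A has decidable equality and fix a linear order on A. If the pair (G, A) is almost convex, then (G, A) is geodesically stackable with respect to the set C of shortlex normal forms; moreover the stacking map Φ can be chosen so that the structure is algorithmic, i.e., the set S_Φ := {(w, a, Φ(π(w), a)) : w ∈ List A, a ∈ A} ⊆ List A × A × List A has computable membership predicate (ComputablePred). -/

import Mathlib

namespace Stk

variable {G : Type*} [Group G] {A : Type*}

/-- Evaluation of a word over the generating alphabet in the group. -/
def eval (ρ : A → G) (w : List A) : G := (w.map ρ).prod

/-- `C` is a set of normal forms: evaluation restricted to `C` is a bijection onto `G`. -/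
def IsNormalFormSet (ρ : A → G) (C : Set (List A)) : Prop :=
  ∀ g : G, ∃! w : List A, w ∈ C ∧ eval ρ w = g

/-- The directed edge `(g, a)` of the Cayley graph is degenerate with respect to `C`. -/
def IsDegenerate (ρ : A → G) (ι : A → A) (C : Set (List A)) (e : G × A) : Prop :=
  ∃ y₁ y₂ : List A, y₁ ∈ C ∧ eval ρ y₁ = e.1 ∧ y₂ ∈ C ∧ eval ρ y₂ = e.1 * ρ e.2 ∧
    (y₁ ++ [e.2] = y₂ ∨ y₁ = y₂ ++ [ι e.2])

/-- A non-degenerate edge is recursive. -/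
def IsRecursive (ρ : A → G) (ι : A → A) (C : Set (List A)) (e : G × A) : Prop :=
  ¬ IsDegenerate ρ ι C e

/-- `e` is one of the edges along the path starting at `g` labeled by the word `w`. -/
def EdgeOnPath (ρ : A → G) (g : G) (w : List A) (e : G × A) : Prop :=
  ∃ i : Fin w.length, e = (g * eval ρ (w.take i), w.get i)

/-- A stackable structure for `(G, A)`: a normal form set `C` containing the empty word,
a well-founded strict partial order `lt` on the recursive edges, and a constant `k`,
such that each edge `(g, a)` admits a word of length at most `k` evaluating to `ρ a`,
each of whose edges along the path from `g` is degenerate or recursive and `lt`-below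
`(g, a)`. -/
def IsStackableStructure (ρ : A → G) (ι : A → A) (C : Set (List A))
    (lt : G × A → G × A → Prop) (k : ℕ) : Prop :=
  ([] : List A) ∈ C ∧ IsNormalFormSet ρ C ∧
  (∀ e e' : G × A, lt e e' → IsRecursive ρ ι C e ∧ IsRecursive ρ ι C e') ∧
  Transitive lt ∧ WellFounded lt ∧
  ∀ g : G, ∀ a : A, ∃ w : List A, w.length ≤ k ∧ eval ρ w = ρ a ∧
    ∀ e' : G × A, EdgeOnPath ρ g w e' → IsDegenerate ρ ι C e' ∨ lt e' (g, a)

/-- The pair `(G, A)` is stackable. -/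
def IsStackable (ρ : A → G) (ι : A → A) : Prop :=
  ∃ (C : Set (List A)) (lt : G × A → G × A → Prop) (k : ℕ),
    IsStackableStructure ρ ι C lt k

/-- A stacking map for a stackable structure. -/
def IsStackingMap (ρ : A → G) (ι : A → A) (C : Set (List A))
    (lt : G × A → G × A → Prop) (k : ℕ) (Φ : G × A → List A) : Prop :=
  ∀ e : G × A, IsRecursive ρ ι C e →
    eval ρ (Φ e) = ρ e.2 ∧ (Φ e).length ≤ k ∧
    ∀ e' : G × A, EdgeOnPath ρ e.1 (Φ e) e' → IsDegenerate ρ ι C e' ∨ lt e' e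

/-- A stacking map extended by `Φ (g, a) = [a]` on degenerate edges. -/
def IsExtendedStackingMap (ρ : A → G) (ι : A → A) (C : Set (List A))
    (lt : G × A → G × A → Prop) (k : ℕ) (Φ : G × A → List A) : Prop :=
  (∀ e : G × A, IsDegenerate ρ ι C e → Φ e = [e.2]) ∧ IsStackingMap ρ ι C lt k Φ

/-- A word is freely reduced if no letter is followed by its formal inverse. -/
def FreelyReduced (ι : A → A) (w : List A) : Prop :=
  List.Chain' (fun a b => b ≠ ι a) w


/-- Word length of a group element with respect to the generating set. -/
noncomputable def wlen (ρ : A → G) (g : G) : ℕ :=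
  sInf {n : ℕ | ∃ w : List A, w.length = n ∧ eval ρ w = g}

/-- The path starting at `g` labeled by `w` lies in the ball of radius `n`: all vertices
are within distance `n` of the identity, and no edge has both endpoints at distance
exactly `n`. -/
def PathInBall (ρ : A → G) (g : G) (w : List A) (n : ℕ) : Prop :=
  (∀ p : List A, p <+: w → wlen ρ (g * eval ρ p) ≤ n) ∧
  ∀ (p : List A) (a : A), p ++ [a] <+: w →
    ¬ (wlen ρ (g * eval ρ p) = n ∧ wlen ρ (g * eval ρ (p ++ [a])) = n)

/-- `(G, A)` is almost convex. -/
def IsAlmostConvex (ρ : A → G) : Prop :=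
  ∃ k : ℕ, ∀ (n : ℕ) (g h : G), wlen ρ g = n → wlen ρ h = n →
    wlen ρ (g⁻¹ * h) ≤ 2 →
    ∃ w : List A, w.length ≤ k ∧ eval ρ w = g⁻¹ * h ∧ PathInBall ρ g w n

/-- The average distance to the identity of the endpoints of an edge. -/
noncomputable def edgeDist (ρ : A → G) (e : G × A) : ℚ :=
  ((wlen ρ e.1 : ℚ) + (wlen ρ (e.1 * ρ e.2) : ℚ)) / 2

/-- The basic relation whose transitive closure is `<_Φ`: `e'` precedes `e` if both are
recursive and `e'` lies along the path of `Φ e`. -/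
def FlowPrec (ρ : A → G) (ι : A → A) (C : Set (List A)) (Φ : G × A → List A)
    (e' e : G × A) : Prop :=
  IsRecursive ρ ι C e ∧ IsRecursive ρ ι C e' ∧ EdgeOnPath ρ e.1 (Φ e) e'

/-- `(G, A)` is geodesically stackable: stackable with geodesic normal forms and a
stacking map compatible with distance to the identity. -/
def IsGeodesicallyStackable (ρ : A → G) (ι : A → A) : Prop :=
  ∃ (C : Set (List A)) (lt : G × A → G × A → Prop) (k : ℕ) (Φ : G × A → List A),
    IsStackableStructure ρ ι C lt k ∧ IsStackingMap ρ ι C lt k Φ ∧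
    (∀ w ∈ C, w.length = wlen ρ (eval ρ w)) ∧
    ∀ e' e : G × A, Relation.TransGen (FlowPrec ρ ι C Φ) e' e →
      edgeDist ρ e' < edgeDist ρ e

/-- The canonical `Primcodable` encoding of a finite type with decidable equality. -/
noncomputable instance (priority := 100) primcodableOfFintype {B : Type*} [Fintype B] [DecidableEq B] :
    Primcodable B :=
  Primcodable.ofEquiv (Fin (Fintype.card B)) (Fintype.equivFin B)

/-- The shortlex order on words induced by a linear order on the alphabet. -/
def ShortlexLt {A : Type*} [LinearOrder A] (u v : List A) : Prop :=
  u.length < v.length ∨ (u.length = v.length ∧ List.Lex (· < ·) u v)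

/-- The set of shortlex normal forms: words that are shortlex minimal among all words
representing the same group element. -/
def shortlexNF (ρ : A → G) [LinearOrder A] : Set (List A) :=
  {w : List A | ∀ v : List A, eval ρ v = eval ρ w → v = w ∨ ShortlexLt w v}

/-! Almost convexity bounds the length of a *stacking word* for every edge `(g, a)`: a word equal
to `a` in `G` all of whose edges from `g` are degenerate or have a smaller sum of distances to the
identity. For an edge within a sphere this is the almost convexity word itself; for an edge between
two spheres, it is an almost convexity path within the smaller sphere together with the tree edge
(last letter of a shortlex normal form) into or out of the larger one.

Replacing edges by their stacking words, recursively, turns any word into the normal form of the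
element it represents, so `G` is presented by its short relations, with a primitive recursive
bound on the depth of derivations. This solves the word problem, and with it makes
normal forms, distances to the identity and the property of being a stacking word computable. The
stacking map sends a recursive edge to its shortlex least stacking word. -/

section Evaluation

@[simp]
theorem eval_nil (ρ : A → G) : eval ρ [] = 1 := rfl

@[simp]
theorem eval_cons (ρ : A → G) (a : A) (w : List A) : eval ρ (a :: w) = ρ a * eval ρ w := by
  simp [eval]

@[simp]
theorem eval_append (ρ : A → G) (u v : List A) : eval ρ (u ++ v) = eval ρ u * eval ρ v := by
  simp [eval]

theorem eval_surjective {ρ : A → G} {ι : A → A} (hgen : Subgroup.closure (Set.range ρ) = ⊤)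
    (hρι : ∀ a, ρ (ι a) = (ρ a)⁻¹) : Function.Surjective (eval ρ) := by
  intro g
  have hg : g ∈ Submonoid.closure (Set.range ρ ∪ (Set.range ρ)⁻¹) := by
    rw [← Subgroup.closure_toSubmonoid, hgen]
    trivial
  obtain ⟨l, hl, rfl⟩ := Submonoid.exists_list_of_mem_closure hg
  have hl_range : ∀ x ∈ l, x ∈ Set.range ρ := by
    intro x hx
    rcases hl x hx with h | ⟨a, ha⟩
    · exact h
    · exact ⟨ι a, by rw [hρι, ha, inv_inv]⟩
  obtain ⟨w, rfl⟩ : l ∈ Set.range (List.map ρ) := by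
    rwa [Set.range_list_map]
  exact ⟨w, rfl⟩

theorem wlen_eval_le (ρ : A → G) (w : List A) : wlen ρ (eval ρ w) ≤ w.length :=
  Nat.sInf_le ⟨w, rfl, rfl⟩

theorem exists_length_le_wlen {ρ : A → G} (hsurj : Function.Surjective (eval ρ)) (g : G) :
    ∃ w : List A, w.length ≤ wlen ρ g ∧ eval ρ w = g := by
  obtain ⟨v, hv⟩ := hsurj g
  obtain ⟨w, hlen, hw⟩ := Nat.sInf_mem (s := {n | ∃ w : List A, w.length = n ∧ eval ρ w = g})
    ⟨_, v, rfl, hv⟩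
  exact ⟨w, hlen.le, hw⟩

@[simp]
theorem wlen_one (ρ : A → G) : wlen ρ (1 : G) = 0 :=
  Nat.le_zero.1 (wlen_eval_le ρ [])

theorem wlen_mul_eval_le {ρ : A → G} (hsurj : Function.Surjective (eval ρ)) (g : G)
    (w : List A) : wlen ρ (g * eval ρ w) ≤ wlen ρ g + w.length := by
  obtain ⟨v, hlen, hv⟩ := exists_length_le_wlen hsurj g
  calc wlen ρ (g * eval ρ w) = wlen ρ (eval ρ (v ++ w)) := by rw [eval_append, hv]
    _ ≤ v.length + w.length := by simpa using wlen_eval_le ρ (v ++ w)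
    _ ≤ wlen ρ g + w.length := by lia

theorem wlen_mul_le_succ {ρ : A → G} (hsurj : Function.Surjective (eval ρ)) (g : G) (a : A) :
    wlen ρ (g * ρ a) ≤ wlen ρ g + 1 := by
  simpa using wlen_mul_eval_le hsurj g [a]

theorem wlen_le_mul_succ {ρ : A → G} {ι : A → A} (hsurj : Function.Surjective (eval ρ))
    (hρι : ∀ a, ρ (ι a) = (ρ a)⁻¹) (g : G) (a : A) : wlen ρ g ≤ wlen ρ (g * ρ a) + 1 := by
  simpa [hρι] using wlen_mul_le_succ hsurj (g * ρ a) (ι a)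

end Evaluation

section Paths

@[simp]
theorem not_edgeOnPath_nil (ρ : A → G) (g : G) (e : G × A) : ¬ EdgeOnPath ρ g [] e :=
  fun ⟨i, _⟩ => i.elim0

theorem edgeOnPath_cons {ρ : A → G} {g : G} {a : A} {w : List A} {e : G × A} :
    EdgeOnPath ρ g (a :: w) e ↔ e = (g, a) ∨ EdgeOnPath ρ (g * ρ a) w e := by
  constructor
  · rintro ⟨i, rfl⟩
    refine Fin.cases ?_ (fun j => ?_) i
    · simp
    · exact Or.inr ⟨j, by simp [mul_assoc]⟩
  · rintro (rfl | ⟨j, rfl⟩)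
    · exact ⟨⟨0, Nat.succ_pos _⟩, by simp⟩
    · exact ⟨j.succ, by simp [mul_assoc]⟩

theorem edgeOnPath_append {ρ : A → G} {g : G} {u v : List A} {e : G × A} :
    EdgeOnPath ρ g (u ++ v) e ↔ EdgeOnPath ρ g u e ∨ EdgeOnPath ρ (g * eval ρ u) v e := by
  induction u generalizing g with
  | nil => simp
  | cons a u ih => simp only [List.cons_append, edgeOnPath_cons, ih, eval_cons, mul_assoc, or_assoc]

theorem edgeOnPath_singleton {ρ : A → G} {g : G} {a : A} {e : G × A} :
    EdgeOnPath ρ g [a] e ↔ e = (g, a) := by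
  simp [edgeOnPath_cons]

theorem EdgeOnPath.wlen_le {ρ : A → G} (hsurj : Function.Surjective (eval ρ)) {g : G}
    {w : List A} {e : G × A} (he : EdgeOnPath ρ g w e) :
    wlen ρ e.1 ≤ wlen ρ g + w.length ∧ wlen ρ (e.1 * ρ e.2) ≤ wlen ρ g + w.length := by
  induction w generalizing g with
  | nil => simp at he
  | cons a w ih =>
    have hga := wlen_mul_le_succ hsurj g a
    rw [List.length_cons]
    rcases edgeOnPath_cons.1 he with rfl | he
    · constructor <;> dsimp only <;> omega
    · have := ih he
      omega

/-- The sum of the distances of the endpoints of an edge to the identity, that is twice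
`edgeDist`; being a natural number, it is suited to induction and to computation. -/
noncomputable def endpointDist (ρ : A → G) (e : G × A) : ℕ := wlen ρ e.1 + wlen ρ (e.1 * ρ e.2)

theorem edgeDist_lt_edgeDist_iff {ρ : A → G} {e' e : G × A} :
    edgeDist ρ e' < edgeDist ρ e ↔ endpointDist ρ e' < endpointDist ρ e := by
  rw [edgeDist, edgeDist, div_lt_div_iff_of_pos_right two_pos, endpointDist, endpointDist]
  norm_cast

theorem PathInBall.endpointDist_lt {ρ : A → G} {g : G} {w : List A} {n : ℕ}
    (h : PathInBall ρ g w n) {e : G × A} (he : EdgeOnPath ρ g w e) :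
    endpointDist ρ e < 2 * n := by
  obtain ⟨i, rfl⟩ := he
  have hprefix : w.take i ++ [w.get i] <+: w := by
    simpa using List.take_prefix (i + 1) w
  have hstart := h.1 _ ((List.prefix_append _ _).trans hprefix)
  have hend := h.1 _ hprefix
  have hsphere := h.2 _ _ hprefix
  simp only [eval_append, eval_cons, eval_nil, mul_one, ← mul_assoc] at hend hsphere
  dsimp only [endpointDist]
  omega

end Paths

section Shortlex

theorem ShortlexLt.asymm [LinearOrder A] {u v : List A} (h : ShortlexLt u v) :
    ¬ ShortlexLt v u := fun h' =>
  Std.Asymm.asymm (r := List.Shortlex (· < ·)) u v (List.shortlex_def.2 h) (List.shortlex_def.2 h')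

theorem lex_of_lex_append_right [LinearOrder A] {s : List A} :
    ∀ {u v : List A}, u.length = v.length →
      List.Lex (· < ·) (u ++ s) (v ++ s) → List.Lex (· < ·) u v
  | [], [], _, h => absurd h (lt_irrefl s)
  | _ :: _, _ :: _, _, .rel h => .rel h
  | _ :: _, _ :: _, hlen, .cons h => .cons (lex_of_lex_append_right (by simpa using hlen) h)

variable [LinearOrder A]

theorem eval_injOn_shortlexNF (ρ : A → G) : Set.InjOn (eval ρ) (shortlexNF ρ) := by
  intro u hu v hv huv
  rcases hu v huv.symm with rfl | hlt
  · rfl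
  · exact ((hv u huv).resolve_right hlt.asymm)

theorem mem_shortlexNF_of_append {ρ : A → G} {u s : List A} (h : u ++ s ∈ shortlexNF ρ) :
    u ∈ shortlexNF ρ := by
  intro v hv
  rcases h (v ++ s) (by simp [hv]) with heq | hlen | ⟨hlen, hlex⟩
  · exact Or.inl (List.append_cancel_right heq)
  · exact Or.inr (Or.inl (by simpa using hlen))
  · have hlen : u.length = v.length := by simpa using hlen
    exact Or.inr (Or.inr ⟨hlen, lex_of_lex_append_right hlen hlex⟩)

theorem nil_mem_shortlexNF (ρ : A → G) : [] ∈ shortlexNF ρ := by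
  rintro (_ | ⟨a, v⟩) _
  · exact Or.inl rfl
  · exact Or.inr (Or.inl (by simp))

theorem length_eq_wlen_of_mem_shortlexNF {ρ : A → G} {u : List A} (hu : u ∈ shortlexNF ρ) :
    u.length = wlen ρ (eval ρ u) := by
  refine le_antisymm (le_csInf ⟨_, u, rfl, rfl⟩ ?_) (wlen_eval_le ρ u)
  rintro _ ⟨v, rfl, hv⟩
  rcases hu v hv with rfl | hlt | ⟨heq, _⟩
  exacts [le_rfl, hlt.le, heq.le]

end Shortlex

section NormalForm

variable [LinearOrder A] {ρ : A → G}

/-- The shortlex normal form of a group element, meaningful when the generators generate `G` and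
their order is well-founded. -/
noncomputable def normalForm (ρ : A → G) (g : G) : List A :=
  Classical.epsilon fun w => w ∈ shortlexNF ρ ∧ eval ρ w = g

variable [WellFoundedLT A]

theorem normalForm_spec (hsurj : Function.Surjective (eval ρ)) (g : G) :
    normalForm ρ g ∈ shortlexNF ρ ∧ eval ρ (normalForm ρ g) = g := by
  have hwf : WellFounded (List.Shortlex (α := A) (· < ·)) := List.Shortlex.wf wellFounded_lt
  obtain ⟨u, hu, hmin⟩ := hwf.has_min {w | eval ρ w = g} (hsurj g)
  refine Classical.epsilon_spec (p := fun w => w ∈ shortlexNF ρ ∧ eval ρ w = g)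
    ⟨u, fun v hv => or_iff_not_imp_right.2 fun hlt => ?_, hu⟩
  exact Std.Trichotomous.trichotomous (r := List.Shortlex (· < ·)) v u (hmin v (hv.trans hu))
    fun h => hlt (List.shortlex_def.1 h)

theorem normalForm_mem (hsurj : Function.Surjective (eval ρ)) (g : G) :
    normalForm ρ g ∈ shortlexNF ρ :=
  (normalForm_spec hsurj g).1

theorem eval_normalForm (hsurj : Function.Surjective (eval ρ)) (g : G) :
    eval ρ (normalForm ρ g) = g :=
  (normalForm_spec hsurj g).2

theorem eq_normalForm (hsurj : Function.Surjective (eval ρ)) {g : G} {u : List A}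
    (hu : u ∈ shortlexNF ρ) (hug : eval ρ u = g) : u = normalForm ρ g :=
  eval_injOn_shortlexNF ρ hu (normalForm_mem hsurj g) (hug.trans (eval_normalForm hsurj g).symm)

theorem isNormalFormSet_shortlexNF (hsurj : Function.Surjective (eval ρ)) :
    IsNormalFormSet ρ (shortlexNF ρ) := fun g =>
  ⟨normalForm ρ g, ⟨normalForm_mem hsurj g, eval_normalForm hsurj g⟩,
    fun _ hu => eq_normalForm hsurj hu.1 hu.2⟩

theorem normalForm_one (hsurj : Function.Surjective (eval ρ)) : normalForm ρ (1 : G) = [] :=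
  (eq_normalForm hsurj (nil_mem_shortlexNF ρ) (eval_nil ρ)).symm

theorem length_normalForm (hsurj : Function.Surjective (eval ρ)) (g : G) :
    (normalForm ρ g).length = wlen ρ g := by
  rw [length_eq_wlen_of_mem_shortlexNF (normalForm_mem hsurj g), eval_normalForm hsurj]

theorem exists_normalForm_eq_concat (hsurj : Function.Surjective (eval ρ)) {g : G} {n : ℕ}
    (hg : wlen ρ g = n + 1) :
    ∃ h b, h * ρ b = g ∧ wlen ρ h = n ∧ normalForm ρ g = normalForm ρ h ++ [b] := by
  have hlen := length_normalForm hsurj g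
  rcases List.eq_nil_or_concat' (normalForm ρ g) with hnil | ⟨y, b, hy⟩
  · simp [hnil, hg] at hlen
  · have hyNF : y ∈ shortlexNF ρ := mem_shortlexNF_of_append (hy ▸ normalForm_mem hsurj g)
    refine ⟨eval ρ y, b, ?_, ?_, ?_⟩
    · rw [← eval_normalForm hsurj g, hy]
      simp
    · rw [← length_eq_wlen_of_mem_shortlexNF hyNF]
      simpa [hy, hg] using hlen
    · rw [← eq_normalForm hsurj hyNF rfl, hy]

theorem isDegenerate_iff {ι : A → A} (hsurj : Function.Surjective (eval ρ)) {e : G × A} :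
    IsDegenerate ρ ι (shortlexNF ρ) e ↔
      normalForm ρ e.1 ++ [e.2] = normalForm ρ (e.1 * ρ e.2) ∨
        normalForm ρ e.1 = normalForm ρ (e.1 * ρ e.2) ++ [ι e.2] := by
  constructor
  · rintro ⟨y, z, hy, hye, hz, hze, h⟩
    rwa [← eq_normalForm hsurj hy hye, ← eq_normalForm hsurj hz hze]
  · exact fun h => ⟨_, _, normalForm_mem hsurj _, eval_normalForm hsurj _, normalForm_mem hsurj _,
      eval_normalForm hsurj _, h⟩

end NormalForm

section StackingWord

/-- The almost convexity condition on `ρ` with the explicit constant `k`. -/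
def AlmostConvexWith (ρ : A → G) (k : ℕ) : Prop :=
  ∀ (n : ℕ) (g h : G), wlen ρ g = n → wlen ρ h = n → wlen ρ (g⁻¹ * h) ≤ 2 →
    ∃ w : List A, w.length ≤ k ∧ eval ρ w = g⁻¹ * h ∧ PathInBall ρ g w n

theorem AlmostConvexWith.exists_word {ρ : A → G} {k : ℕ} (hk : AlmostConvexWith ρ k) {g : G}
    {s : List A} (hs : s.length ≤ 2) (hgs : wlen ρ (g * eval ρ s) = wlen ρ g) :
    ∃ w : List A, w.length ≤ k ∧ eval ρ w = eval ρ s ∧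
      ∀ e, EdgeOnPath ρ g w e → endpointDist ρ e < 2 * wlen ρ g := by
  obtain ⟨w, hwk, hw, hball⟩ := hk _ g (g * eval ρ s) rfl hgs <| by
    simpa using (wlen_eval_le ρ s).trans hs
  exact ⟨w, hwk, by simpa using hw, fun _ => hball.endpointDist_lt⟩

variable [LinearOrder A] {ρ : A → G} {ι : A → A} {k : ℕ}

/-- The word `w` may serve as the value at the edge `e` of a stacking map for the shortlex normal
forms whose order on edges is the comparison of `endpointDist`. -/
def IsStackingWord (ρ : A → G) (ι : A → A) (e : G × A) (w : List A) : Prop :=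
  eval ρ w = ρ e.2 ∧ ∀ e', EdgeOnPath ρ e.1 w e' →
    IsDegenerate ρ ι (shortlexNF ρ) e' ∨ endpointDist ρ e' < endpointDist ρ e

/-- Every edge has a stacking word of length at most `K`. -/
def HasBoundedStackingWords (ρ : A → G) (ι : A → A) (K : ℕ) : Prop :=
  ∀ e : G × A, ∃ w : List A, w.length ≤ K ∧ IsStackingWord ρ ι e w

theorem HasBoundedStackingWords.mono {K K' : ℕ} (h : HasBoundedStackingWords ρ ι K)
    (hK : K ≤ K') : HasBoundedStackingWords ρ ι K' := fun e =>
  let ⟨w, hwK, hw⟩ := h e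
  ⟨w, hwK.trans hK, hw⟩

theorem AlmostConvexWith.exists_isStackingWord_of_wlen_eq (hk : AlmostConvexWith ρ k) {g : G}
    {a : A} (hga : wlen ρ (g * ρ a) = wlen ρ g) :
    ∃ w : List A, w.length ≤ k ∧ IsStackingWord ρ ι (g, a) w := by
  obtain ⟨w, hwk, hw, hlt⟩ := hk.exists_word (g := g) (s := [a]) (by simp) (by simpa using hga)
  refine ⟨w, hwk, by simpa using hw, fun e he => Or.inr ?_⟩
  have := hlt e he
  dsimp only [endpointDist] at this ⊢
  lia

variable [WellFoundedLT A]

theorem AlmostConvexWith.exists_isStackingWord_of_wlen_mul_eq_succ (hk : AlmostConvexWith ρ k)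
    (hsurj : Function.Surjective (eval ρ)) (hρι : ∀ a, ρ (ι a) = (ρ a)⁻¹) {g : G} {a : A}
    (hga : wlen ρ (g * ρ a) = wlen ρ g + 1) :
    ∃ w : List A, w.length ≤ k + 1 ∧ IsStackingWord ρ ι (g, a) w := by
  obtain ⟨h, b, hb, hh, hnf⟩ := exists_normalForm_eq_concat hsurj hga
  have hgh : g * eval ρ [a, ι b] = h := by
    simp [hρι, ← mul_assoc, ← hb]
  obtain ⟨w, hwk, hw, hlt⟩ := hk.exists_word (by simp) (hgh ▸ hh)
  have hend : g * eval ρ w = h := hw ▸ hgh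
  refine ⟨w ++ [b], by simpa using hwk, by simp [hw, hρι], fun e he => ?_⟩
  rcases edgeOnPath_append.1 he with he | he
  · have := hlt e he
    right
    dsimp only [endpointDist] at this ⊢
    lia
  · obtain rfl := edgeOnPath_singleton.1 he
    left
    rw [hend, isDegenerate_iff hsurj, hb, hnf]
    exact Or.inl rfl

theorem AlmostConvexWith.exists_isStackingWord_of_wlen_eq_succ (hk : AlmostConvexWith ρ k)
    (hsurj : Function.Surjective (eval ρ)) (hinv : Function.Involutive ι)
    (hρι : ∀ a, ρ (ι a) = (ρ a)⁻¹) {g : G} {a : A} (hga : wlen ρ g = wlen ρ (g * ρ a) + 1) :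
    ∃ w : List A, w.length ≤ k + 1 ∧ IsStackingWord ρ ι (g, a) w := by
  obtain ⟨h, b, hb, hh, hnf⟩ := exists_normalForm_eq_concat hsurj hga
  have hhb : g * ρ (ι b) = h := by rw [hρι, ← hb, mul_inv_cancel_right]
  have hhs : h * eval ρ [b, a] = g * ρ a := by simp [← hb, mul_assoc]
  obtain ⟨w, hwk, hw, hlt⟩ := hk.exists_word (g := h) (s := [b, a]) (by simp) (by rw [hhs, hh])
  refine ⟨ι b :: w, by simpa using hwk, by simp [hw, hρι], fun e he => ?_⟩
  rcases edgeOnPath_cons.1 he with rfl | he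
  · left
    rw [isDegenerate_iff hsurj, hhb, hnf, hinv]
    exact Or.inr rfl
  · have := hlt e (hhb ▸ he)
    right
    dsimp only [endpointDist] at this ⊢
    lia

theorem AlmostConvexWith.hasBoundedStackingWords (hk : AlmostConvexWith ρ k)
    (hsurj : Function.Surjective (eval ρ)) (hinv : Function.Involutive ι)
    (hρι : ∀ a, ρ (ι a) = (ρ a)⁻¹) : HasBoundedStackingWords ρ ι (k + 1) := by
  rintro ⟨g, a⟩
  have hup := wlen_mul_le_succ hsurj g a
  have hdown := wlen_le_mul_succ hsurj hρι g a
  obtain hga | hga | hga : wlen ρ (g * ρ a) = wlen ρ g ∨ wlen ρ (g * ρ a) = wlen ρ g + 1 ∨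
      wlen ρ g = wlen ρ (g * ρ a) + 1 := by lia
  · obtain ⟨w, hwk, hw⟩ := hk.exists_isStackingWord_of_wlen_eq (ι := ι) hga
    exact ⟨w, hwk.trans k.le_succ, hw⟩
  · exact hk.exists_isStackingWord_of_wlen_mul_eq_succ hsurj hρι hga
  · exact hk.exists_isStackingWord_of_wlen_eq_succ hsurj hinv hρι hga

end StackingWord

section Derivations

/-- `DerivableIn r m u v`: the equation `u = v` between words has a derivation of depth at most `m`
from the defining relations `r`, by multiplication with single letters and composition. -/
inductive DerivableIn (r : List A → List A → Prop) : ℕ → List A → List A → Prop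
  | rel {u v : List A} : r u v → DerivableIn r 0 u v
  | weaken {m : ℕ} {u v : List A} : DerivableIn r m u v → DerivableIn r (m + 1) u v
  | cons {m : ℕ} {u v : List A} (a : A) :
      DerivableIn r m u v → DerivableIn r (m + 1) (a :: u) (a :: v)
  | concat {m : ℕ} {u v : List A} (a : A) :
      DerivableIn r m u v → DerivableIn r (m + 1) (u ++ [a]) (v ++ [a])
  | trans {m : ℕ} {u v w : List A} :
      DerivableIn r m u v → DerivableIn r m v w → DerivableIn r (m + 1) u w

variable {r : List A → List A → Prop} {m n : ℕ} {u v : List A}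

namespace DerivableIn

theorem mono (h : DerivableIn r m u v) (hmn : m ≤ n) : DerivableIn r n u v := by
  induction hmn with
  | refl => exact h
  | step _ ih => exact ih.weaken

theorem trans_of_lt {m₁ m₂ : ℕ} {w : List A} (huv : DerivableIn r m₁ u v)
    (hvw : DerivableIn r m₂ v w) (h₁ : m₁ < n) (h₂ : m₂ < n) : DerivableIn r n u w := by
  obtain ⟨n, rfl⟩ := Nat.exists_eq_succ_of_ne_zero (Nat.ne_zero_of_lt h₁)
  exact (huv.mono (Nat.le_of_lt_succ h₁)).trans (hvw.mono (Nat.le_of_lt_succ h₂))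

theorem append_left (h : DerivableIn r m u v) :
    ∀ p : List A, DerivableIn r (m + p.length) (p ++ u) (p ++ v)
  | [] => h
  | a :: p => (append_left h p).cons a

theorem append_right (h : DerivableIn r m u v) (s : List A) :
    DerivableIn r (m + s.length) (u ++ s) (v ++ s) := by
  induction s generalizing m u v with
  | nil => simpa using h
  | cons a s ih => simpa [add_assoc, add_comm 1] using ih (h.concat a)

theorem refl (hr : r [] []) (u : List A) : DerivableIn r u.length u u := by
  simpa using (rel hr).append_left u

theorem symm (hr : ∀ u v, r u v → r v u) (h : DerivableIn r m u v) : DerivableIn r m v u := by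
  induction h with
  | rel h => exact .rel (hr _ _ h)
  | weaken _ ih => exact ih.weaken
  | cons a _ ih => exact ih.cons a
  | concat a _ ih => exact ih.concat a
  | trans _ _ ih₁ ih₂ => exact ih₂.trans ih₁

theorem eval_eq {ρ : A → G} (hr : ∀ u v, r u v → eval ρ u = eval ρ v)
    (h : DerivableIn r m u v) : eval ρ u = eval ρ v := by
  induction h with
  | rel h => exact hr _ _ h
  | weaken _ ih => exact ih
  | cons a _ ih => simp [ih]
  | concat a _ ih => simp [ih]
  | trans _ _ ih₁ ih₂ => exact ih₁.trans ih₂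

theorem append_eval {ρ : A → G} {y : G → List A} {g : G} {w : List A}
    (hend : DerivableIn r m (y (g * eval ρ w)) (y (g * eval ρ w)))
    (hedge : ∀ e, EdgeOnPath ρ g w e → DerivableIn r m (y e.1 ++ [e.2]) (y (e.1 * ρ e.2))) :
    DerivableIn r (m + 2 * w.length) (y g ++ w) (y (g * eval ρ w)) := by
  induction w generalizing g with
  | nil => simpa using hend
  | cons a w ih =>
    have hfirst : DerivableIn r (m + w.length) (y g ++ a :: w) (y (g * ρ a) ++ w) := by
      simpa using (hedge (g, a) (edgeOnPath_cons.2 (.inl rfl))).append_right w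
    have hrest := ih (g := g * ρ a) (by simpa [mul_assoc] using hend)
      fun e he => hedge e (edgeOnPath_cons.2 (.inr he))
    rw [eval_cons, ← mul_assoc]
    exact hfirst.trans_of_lt hrest (by simp; lia) (by simp)

end DerivableIn

/-- The relation between words of length at most `K` of having the same value in `G`. -/
def ShortRelation (ρ : A → G) (K : ℕ) (u v : List A) : Prop :=
  u.length ≤ K ∧ v.length ≤ K ∧ eval ρ u = eval ρ v

theorem ShortRelation.symm {ρ : A → G} {K : ℕ} (h : ShortRelation ρ K u v) :
    ShortRelation ρ K v u :=
  ⟨h.2.1, h.1, h.2.2.symm⟩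

theorem shortRelation_nil (ρ : A → G) (K : ℕ) : ShortRelation ρ K [] [] :=
  ⟨K.zero_le, K.zero_le, rfl⟩

variable [LinearOrder A] [WellFoundedLT A] {ρ : A → G} {ι : A → A} {K : ℕ}

theorem derivableIn_normalForm_refl (hsurj : Function.Surjective (eval ρ)) {g : G}
    (hg : wlen ρ g ≤ n) : DerivableIn (ShortRelation ρ K) n (normalForm ρ g) (normalForm ρ g) :=
  (DerivableIn.refl (shortRelation_nil ρ K) _).mono ((length_normalForm hsurj g).trans_le hg)

theorem derivableIn_of_isDegenerate (hsurj : Function.Surjective (eval ρ))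
    (hρι : ∀ a, ρ (ι a) = (ρ a)⁻¹) (hK : 2 ≤ K) {e : G × A}
    (he : IsDegenerate ρ ι (shortlexNF ρ) e) (hn : wlen ρ (e.1 * ρ e.2) ≤ n) :
    DerivableIn (ShortRelation ρ K) n (normalForm ρ e.1 ++ [e.2])
      (normalForm ρ (e.1 * ρ e.2)) := by
  rcases (isDegenerate_iff hsurj).1 he with h | h
  · rw [h]
    exact derivableIn_normalForm_refl hsurj hn
  · have hcancel : ShortRelation ρ K [ι e.2, e.2] [] := ⟨by simpa using hK, by simp, by simp [hρι]⟩
    rw [h]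
    simpa using ((DerivableIn.rel hcancel).append_left (normalForm ρ (e.1 * ρ e.2))).mono
      (by rwa [zero_add, length_normalForm hsurj])

/-- Derivation depth sufficient for the edges with sum of distances less than `n`, chosen such that
`edgeDepth K n + n + 3 * K < edgeDepth K (n + 1)`. -/
def edgeDepth (K n : ℕ) : ℕ := n * (n + 3 * K + 1)

theorem derivableIn_edge (hsurj : Function.Surjective (eval ρ)) (hρι : ∀ a, ρ (ι a) = (ρ a)⁻¹)
    (hK : 2 ≤ K) (hstack : HasBoundedStackingWords ρ ι K) {e : G × A}
    (he : endpointDist ρ e < n) :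
    DerivableIn (ShortRelation ρ K) (edgeDepth K n) (normalForm ρ e.1 ++ [e.2])
      (normalForm ρ (e.1 * ρ e.2)) := by
  induction n generalizing e with
  | zero => exact absurd he (Nat.not_lt_zero _)
  | succ n ih =>
    obtain ⟨w, hwK, hw, hpath⟩ := hstack e
    have hdist : wlen ρ e.1 ≤ n ∧ wlen ρ (e.1 * ρ e.2) ≤ n := by
      dsimp only [endpointDist] at he
      lia
    have hedges : ∀ e', EdgeOnPath ρ e.1 w e' →
        DerivableIn (ShortRelation ρ K) (edgeDepth K n + n + K) (normalForm ρ e'.1 ++ [e'.2])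
          (normalForm ρ (e'.1 * ρ e'.2)) := by
      intro e' he'
      rcases hpath e' he' with hdeg | hlt
      · have := (he'.wlen_le hsurj).2
        exact derivableIn_of_isDegenerate hsurj hρι hK hdeg (by lia)
      · exact (ih (by lia)).mono (by lia)
    have hword : DerivableIn (ShortRelation ρ K) n (normalForm ρ e.1 ++ [e.2])
        (normalForm ρ e.1 ++ w) :=
      ((DerivableIn.rel ⟨by simp; lia, hwK, by simp [hw]⟩).append_left _).mono
        (by rw [zero_add, length_normalForm hsurj]; exact hdist.1)
    have hwalk := DerivableIn.append_eval
      (derivableIn_normalForm_refl hsurj (by rw [hw]; lia)) hedges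
    have hdepth : edgeDepth K n + n + 3 * K < edgeDepth K (n + 1) := by
      simp only [edgeDepth]
      lia
    rw [hw] at hwalk
    exact hword.trans_of_lt hwalk (by lia) (by lia)

theorem derivableIn_normalForm (hsurj : Function.Surjective (eval ρ))
    (hρι : ∀ a, ρ (ι a) = (ρ a)⁻¹) (hK : 2 ≤ K) (hstack : HasBoundedStackingWords ρ ι K)
    {w : List A} (hw : w.length ≤ n) :
    DerivableIn (ShortRelation ρ K) (edgeDepth K (2 * n + 1) + 3 * n) w
      (normalForm ρ (eval ρ w)) := by
  have hend : wlen ρ (1 * eval ρ w) ≤ edgeDepth K (2 * n + 1) + n := by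
    rw [one_mul]
    exact (wlen_eval_le ρ w).trans (by lia)
  have hedges : ∀ e, EdgeOnPath ρ 1 w e →
      DerivableIn (ShortRelation ρ K) (edgeDepth K (2 * n + 1) + n) (normalForm ρ e.1 ++ [e.2])
        (normalForm ρ (e.1 * ρ e.2)) := by
    intro e he
    have := he.wlen_le hsurj
    rw [wlen_one] at this
    exact (derivableIn_edge hsurj hρι hK hstack (by dsimp only [endpointDist]; lia)).mono
      (Nat.le_add_right _ _)
  have := DerivableIn.append_eval (derivableIn_normalForm_refl hsurj hend) hedges
  rw [normalForm_one hsurj, List.nil_append, one_mul] at this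
  exact this.mono (by lia)

/-- Derivation depth sufficient for the equations between words of total length `n`. -/
def wordDepth (K n : ℕ) : ℕ := edgeDepth K (2 * n + 1) + 3 * n + 1

theorem derivableIn_iff_eval_eq (hsurj : Function.Surjective (eval ρ))
    (hρι : ∀ a, ρ (ι a) = (ρ a)⁻¹) (hK : 2 ≤ K) (hstack : HasBoundedStackingWords ρ ι K) :
    DerivableIn (ShortRelation ρ K) (wordDepth K (u.length + v.length)) u v ↔
      eval ρ u = eval ρ v := by
  refine ⟨DerivableIn.eval_eq fun _ _ h => h.2.2, fun huv => ?_⟩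
  have hu := derivableIn_normalForm hsurj hρι hK hstack (Nat.le_add_right u.length v.length)
  have hv := derivableIn_normalForm hsurj hρι hK hstack (Nat.le_add_left v.length u.length)
  rw [huv] at hu
  exact hu.trans (hv.symm fun _ _ => ShortRelation.symm)

end Derivations

section WordEnumeration

variable [Fintype A] [LinearOrder A]

/-- The words of length `n`, in lexicographic order. -/
def wordsOfLength (A : Type*) [Fintype A] [LinearOrder A] : ℕ → List (List A)
  | 0 => [[]]
  | n + 1 => (Finset.univ.sort (· ≤ ·)).flatMap fun a : A => (wordsOfLength A n).map (a :: ·)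

/-- The words of length at most `n`, in shortlex order. -/
def wordsUpTo (A : Type*) [Fintype A] [LinearOrder A] (n : ℕ) : List (List A) :=
  (List.range (n + 1)).flatMap (wordsOfLength A)

@[simp]
theorem mem_wordsOfLength {n : ℕ} {w : List A} : w ∈ wordsOfLength A n ↔ w.length = n := by
  induction n generalizing w with
  | zero => simp [wordsOfLength]
  | succ n ih => cases w <;> simp [wordsOfLength, ih]

@[simp]
theorem mem_wordsUpTo {n : ℕ} {w : List A} : w ∈ wordsUpTo A n ↔ w.length ≤ n := by
  simp [wordsUpTo]

theorem pairwise_wordsOfLength (n : ℕ) :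
    (wordsOfLength A n).Pairwise (List.Lex (· < ·)) := by
  induction n with
  | zero => simp [wordsOfLength]
  | succ n ih =>
    rw [wordsOfLength, List.pairwise_flatMap]
    refine ⟨fun a _ => List.pairwise_map.2 (ih.imp .cons),
      (Finset.sortedLT_sort _).pairwise.imp fun hab u hu v hv => ?_⟩
    obtain ⟨u, _, rfl⟩ := List.mem_map.1 hu
    obtain ⟨v, _, rfl⟩ := List.mem_map.1 hv
    exact .rel hab

theorem pairwise_wordsUpTo (n : ℕ) : (wordsUpTo A n).Pairwise ShortlexLt := by
  rw [wordsUpTo, List.pairwise_flatMap]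
  refine ⟨fun m _ => (pairwise_wordsOfLength m).imp_of_mem fun hu hv hlex => Or.inr ⟨?_, hlex⟩,
    List.pairwise_lt_range.imp fun hij u hu v hv => Or.inl ?_⟩
  · rw [mem_wordsOfLength.1 hu, mem_wordsOfLength.1 hv]
  · rwa [mem_wordsOfLength.1 hu, mem_wordsOfLength.1 hv]

open Classical in
/-- The shortlex least word of length at most `n` with property `P`, found by exhaustive search;
the empty word if there is none. -/
noncomputable def firstWord (n : ℕ) (P : List A → Prop) : List A :=
  ((wordsUpTo A n).find? (P ·)).getD []

theorem firstWord_spec {n : ℕ} {P : List A → Prop} (h : ∃ w : List A, w.length ≤ n ∧ P w) :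
    (firstWord n P).length ≤ n ∧ P (firstWord n P) ∧
      ∀ v, P v → v = firstWord n P ∨ ShortlexLt (firstWord n P) v := by
  classical
  obtain ⟨w, hwn, hw⟩ := h
  obtain ⟨u, hu⟩ := Option.isSome_iff_exists.1
    (List.find?_isSome (p := (P ·)).2 ⟨w, mem_wordsUpTo.2 hwn, decide_eq_true hw⟩)
  have hfirst : firstWord n P = u := by rw [firstWord, hu, Option.getD_some]
  obtain ⟨hPu, before, after, hsplit, hbefore⟩ := List.find?_eq_some_iff_append.1 hu
  have hun : u.length ≤ n := mem_wordsUpTo.1 (hsplit ▸ by simp)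
  have hafter : ∀ v ∈ after, ShortlexLt u v :=
    (List.pairwise_cons.1 (List.pairwise_append.1 (hsplit ▸ pairwise_wordsUpTo n)).2.1).1
  rw [hfirst]
  refine ⟨hun, of_decide_eq_true hPu, fun v hv => ?_⟩
  rcases le_or_gt v.length n with hvn | hvn
  · have hmem : v ∈ before ++ u :: after := hsplit ▸ mem_wordsUpTo.2 hvn
    have hnot : v ∉ before := fun hb => by simpa [hv] using hbefore v hb
    rcases List.mem_cons.1 ((List.mem_append.1 hmem).resolve_left hnot) with rfl | hv
    exacts [Or.inl rfl, Or.inr (hafter v hv)]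
  · exact Or.inr (Or.inl (hun.trans_lt hvn))

theorem firstWord_eval_eq_normalForm {ρ : A → G} (hsurj : Function.Surjective (eval ρ))
    (w : List A) : firstWord w.length (eval ρ · = eval ρ w) = normalForm ρ (eval ρ w) := by
  obtain ⟨-, heval, hmin⟩ :=
    firstWord_spec (P := (eval ρ · = eval ρ w)) ⟨w, le_rfl, rfl⟩
  exact eq_normalForm hsurj (fun v hv => hmin v (hv.trans heval)) heval

end WordEnumeration

section Computability

section DerivableEquations

open Classical in
/-- The equations derivable in one more step from a list of equations; see `DerivableIn`. -/
noncomputable def derivationStep [Fintype A] (E : List (List A × List A)) :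
    List (List A × List A) :=
  E ++ Finset.univ.toList.flatMap (fun a => E.map fun p => (a :: p.1, a :: p.2)) ++
    Finset.univ.toList.flatMap (fun a => E.map fun p => (p.1 ++ [a], p.2 ++ [a])) ++
    E.flatMap fun p => E.flatMap fun q => if p.2 = q.1 then [(p.1, q.2)] else []

/-- The equations with a derivation of depth at most `m` from the list `R` of relations. -/
noncomputable def derivableEquations [Fintype A] (R : List (List A × List A)) (m : ℕ) :
    List (List A × List A) :=
  Nat.rec R (fun _ => derivationStep) m

theorem mem_derivableEquations [Fintype A] {R : List (List A × List A)} {m : ℕ}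
    {p : List A × List A} :
    p ∈ derivableEquations R m ↔ DerivableIn (fun u v => (u, v) ∈ R) m p.1 p.2 := by
  induction m generalizing p with
  | zero => exact ⟨fun h => .rel h, fun | .rel h => h⟩
  | succ m ih =>
    have hstep : p ∈ derivableEquations R (m + 1) ↔
        p ∈ derivationStep (derivableEquations R m) := Iff.rfl
    simp only [hstep, derivationStep, List.mem_append, List.mem_flatMap, List.mem_map, ih,
      Finset.mem_toList, Finset.mem_univ, true_and]
    constructor
    · rintro (((h | ⟨a, q, h, rfl⟩) | ⟨a, q, h, rfl⟩) | ⟨q, hq, q', hq', h⟩)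
      · exact h.weaken
      · exact h.cons a
      · exact h.concat a
      · split_ifs at h with heq
        · obtain rfl := List.mem_singleton.1 h
          exact hq.trans (heq ▸ hq')
        · simp at h
    · obtain ⟨u, v⟩ := p
      rintro (_ | h | ⟨a, h⟩ | ⟨a, h⟩ | @⟨_, _, x, _, h, h'⟩)
      · exact .inl (.inl (.inl h))
      · exact .inl (.inl (.inr ⟨a, (_, _), h, rfl⟩))
      · exact .inl (.inr ⟨a, (_, _), h, rfl⟩)
      · exact .inr ⟨(u, x), h, (x, v), h', by simp⟩

variable [Primcodable A]

theorem primrec_derivationStep [Fintype A] : Primrec (derivationStep (A := A)) := by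
  classical
  have hcons : Primrec₂ fun (E : List (List A × List A)) (a : A) =>
      E.map fun p => (a :: p.1, a :: p.2) :=
    Primrec.list_map Primrec.fst <| Primrec.pair
      (Primrec.list_cons.comp (Primrec.snd.comp Primrec.fst) (Primrec.fst.comp Primrec.snd))
      (Primrec.list_cons.comp (Primrec.snd.comp Primrec.fst) (Primrec.snd.comp Primrec.snd))
  have hconcat : Primrec₂ fun (E : List (List A × List A)) (a : A) =>
      E.map fun p => (p.1 ++ [a], p.2 ++ [a]) :=
    Primrec.list_map Primrec.fst <| Primrec.pair
      (Primrec.list_concat.comp (Primrec.fst.comp Primrec.snd) (Primrec.snd.comp Primrec.fst))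
      (Primrec.list_concat.comp (Primrec.snd.comp Primrec.snd) (Primrec.snd.comp Primrec.fst))
  have htrans : Primrec₂ fun (x : List (List A × List A) × List A × List A)
      (q : List A × List A) => if x.2.2 = q.1 then [(x.2.1, q.2)] else [] :=
    Primrec.ite
      (Primrec.eq.comp (Primrec.snd.comp (Primrec.snd.comp Primrec.fst))
        (Primrec.fst.comp Primrec.snd))
      (Primrec.list_cons.comp
        (Primrec.pair (Primrec.fst.comp (Primrec.snd.comp Primrec.fst))
          (Primrec.snd.comp Primrec.snd))
        (Primrec.const []))
      (Primrec.const [])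
  exact Primrec.list_append.comp
    (Primrec.list_append.comp
      (Primrec.list_append.comp Primrec.id (Primrec.list_flatMap (Primrec.const _) hcons))
      (Primrec.list_flatMap (Primrec.const _) hconcat))
    (Primrec.list_flatMap Primrec.id (Primrec.list_flatMap Primrec.fst htrans))

theorem primrecPred_derivableIn [Finite A] {r : List A → List A → Prop}
    (hr : {p : List A × List A | r p.1 p.2}.Finite) :
    PrimrecPred fun x : ℕ × List A × List A => DerivableIn r x.1 x.2.1 x.2.2 := by
  have := Fintype.ofFinite A
  have hmem : ∀ u v, (u, v) ∈ hr.toFinset.toList ↔ r u v := by simp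
  have htable : Primrec (derivableEquations hr.toFinset.toList) :=
    Primrec.nat_rec₁ _ (primrec_derivationStep.comp Primrec.snd)
  have heq : PrimrecRel fun p q : List A × List A => p = q := Primrec.eq
  refine (heq.exists_mem_list.comp (htable.comp Primrec.fst) Primrec.snd).of_eq fun x => ?_
  simp only [exists_eq_right, mem_derivableEquations, hmem]

end DerivableEquations

theorem finite_shortRelation [Finite A] (ρ : A → G) (K : ℕ) :
    {p : List A × List A | ShortRelation ρ K p.1 p.2}.Finite :=
  ((List.finite_length_le A K).prod (List.finite_length_le A K)).subset fun _ h => ⟨h.1, h.2.1⟩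

theorem primrec_wordDepth (K : ℕ) : Primrec (wordDepth K) := by
  have hedge : Primrec (edgeDepth K) :=
    Primrec.nat_mul.comp Primrec.id (Primrec.nat_add.comp
      (Primrec.nat_add.comp Primrec.id (Primrec.const _)) (Primrec.const 1))
  exact Primrec.succ.comp (Primrec.nat_add.comp
    (hedge.comp (Primrec.succ.comp (Primrec.nat_mul.comp (Primrec.const 2) Primrec.id)))
    (Primrec.nat_mul.comp (Primrec.const 3) Primrec.id))

/-- The edge of the Cayley graph with label `p.2` whose initial vertex is the value of the word
`p.1`: computations represent edges by such pairs. -/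
def wordEdge (ρ : A → G) (p : List A × A) : G × A := (eval ρ p.1, p.2)

/-- The edges, represented as for `wordEdge`, along the path labeled by `v` that starts at the
value of `u`. -/
def pathEdges (u v : List A) : List (List A × A) :=
  (List.range v.length).filterMap fun i => v[i]?.map fun a => (u ++ v.take i, a)

theorem edgeOnPath_iff_exists_mem_pathEdges {ρ : A → G} {u v : List A} {e : G × A} :
    EdgeOnPath ρ (eval ρ u) v e ↔ ∃ p ∈ pathEdges u v, wordEdge ρ p = e := by
  simp only [pathEdges, List.mem_filterMap, List.mem_range, Option.map_eq_some_iff]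
  constructor
  · rintro ⟨i, rfl⟩
    exact ⟨_, ⟨i, i.2, v.get i, by simp, rfl⟩, by simp [wordEdge]⟩
  · rintro ⟨_, ⟨i, _, a, ha, rfl⟩, rfl⟩
    obtain ⟨hi, rfl⟩ := List.getElem?_eq_some_iff.1 ha
    exact ⟨⟨i, hi⟩, by simp [wordEdge]⟩

theorem primrec_pathEdges [Primcodable A] : Primrec₂ (pathEdges (A := A)) :=
  Primrec.listFilterMap (Primrec.list_range.comp (Primrec.list_length.comp Primrec.snd)) <|
    Primrec.option_map
      (Primrec.list_getElem?.comp (Primrec.snd.comp Primrec.fst) Primrec.snd)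
      (Primrec.pair
        (Primrec.list_append.comp (Primrec.fst.comp (Primrec.fst.comp Primrec.fst))
          (Primrec.list_take.comp (Primrec.snd.comp Primrec.fst)
            (Primrec.snd.comp (Primrec.fst.comp Primrec.fst))))
        Primrec.snd)

section Search

variable [Fintype A] [LinearOrder A] [Primcodable A]

theorem primrec_wordsUpTo : Primrec (wordsUpTo A) := by
  have hwords : Primrec (wordsOfLength A) := by
    refine (Primrec.nat_rec₁ (f := fun _ W =>
      (Finset.univ.sort (· ≤ ·)).flatMap fun a : A => W.map (a :: ·)) [[]] ?_).of_eq fun n => ?_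
    · exact Primrec.list_flatMap (Primrec.const _) <|
        Primrec.list_map (Primrec.snd.comp Primrec.fst)
          (Primrec.list_cons.comp (Primrec.snd.comp Primrec.fst) Primrec.snd)
    · induction n with
      | zero => rfl
      | succ n ih => rw [wordsOfLength, ← ih]
  exact Primrec.list_flatMap (Primrec.list_range.comp Primrec.succ) (hwords.comp Primrec.snd)

theorem primrec_firstWord {α : Type*} [Primcodable α] {P : List A → α → Prop} {f : α → ℕ}
    (hP : PrimrecRel P) (hf : Primrec f) : Primrec fun x => firstWord (f x) (P · x) := by
  classical
  refine (Primrec.option_getD.comp (Primrec.list_head?.comp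
    (hP.listFilter.comp (primrec_wordsUpTo.comp hf) Primrec.id)) (Primrec.const [])).of_eq
    fun x => ?_
  rw [firstWord, ← List.head?_filter]
  rfl

end Search

variable [Finite A] [LinearOrder A] [Primcodable A] {ρ : A → G} {ι : A → A}

theorem HasBoundedStackingWords.primrecRel_eval_eq {K : ℕ}
    (hstack : HasBoundedStackingWords ρ ι K) (hsurj : Function.Surjective (eval ρ))
    (hρι : ∀ a, ρ (ι a) = (ρ a)⁻¹) (hK : 2 ≤ K) :
    PrimrecRel fun u v : List A => eval ρ u = eval ρ v := by
  have hdepth : Primrec fun p : List A × List A => wordDepth K (p.1.length + p.2.length) :=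
    (primrec_wordDepth K).comp (Primrec.nat_add.comp (Primrec.list_length.comp Primrec.fst)
      (Primrec.list_length.comp Primrec.snd))
  exact ((primrecPred_derivableIn (finite_shortRelation ρ K)).comp
    (hdepth.pair Primrec.id)).of_eq fun _ => derivableIn_iff_eval_eq hsurj hρι hK hstack

theorem primrec_normalForm_eval (hsurj : Function.Surjective (eval ρ))
    (heq : PrimrecRel fun u v : List A => eval ρ u = eval ρ v) :
    Primrec fun w : List A => normalForm ρ (eval ρ w) := by
  have := Fintype.ofFinite A
  exact (primrec_firstWord heq Primrec.list_length).of_eq fun w =>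
    firstWord_eval_eq_normalForm hsurj w

theorem primrec_normalForm_eval_mul (hsurj : Function.Surjective (eval ρ))
    (heq : PrimrecRel fun u v : List A => eval ρ u = eval ρ v) :
    Primrec fun p : List A × A => normalForm ρ (eval ρ p.1 * ρ p.2) :=
  ((primrec_normalForm_eval hsurj heq).comp
    (Primrec.list_concat.comp Primrec.fst Primrec.snd)).of_eq fun p => by simp

theorem primrec_endpointDist_wordEdge (hsurj : Function.Surjective (eval ρ))
    (heq : PrimrecRel fun u v : List A => eval ρ u = eval ρ v) :
    Primrec fun p => endpointDist ρ (wordEdge ρ p) :=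
  (Primrec.nat_add.comp
    (Primrec.list_length.comp ((primrec_normalForm_eval hsurj heq).comp Primrec.fst))
    (Primrec.list_length.comp (primrec_normalForm_eval_mul hsurj heq))).of_eq fun p => by
      simp only [length_normalForm hsurj, endpointDist, wordEdge]

theorem primrecPred_isDegenerate_wordEdge (hsurj : Function.Surjective (eval ρ))
    (heq : PrimrecRel fun u v : List A => eval ρ u = eval ρ v) :
    PrimrecPred fun p => IsDegenerate ρ ι (shortlexNF ρ) (wordEdge ρ p) := by
  have hstart := (primrec_normalForm_eval hsurj heq).comp (Primrec.fst (β := A))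
  have hend := primrec_normalForm_eval_mul hsurj heq
  have hι : Primrec fun p : List A × A => ι p.2 := (Primrec.dom_finite ι).comp Primrec.snd
  exact ((Primrec.eq.comp (Primrec.list_concat.comp hstart Primrec.snd) hend).or
    (Primrec.eq.comp hstart (Primrec.list_concat.comp hend hι))).of_eq fun p =>
      (isDegenerate_iff (e := wordEdge ρ p) hsurj).symm

theorem primrecRel_isStackingWord (hsurj : Function.Surjective (eval ρ))
    (heq : PrimrecRel fun u v : List A => eval ρ u = eval ρ v) :
    PrimrecRel fun (w : List A) p => IsStackingWord ρ ι (wordEdge ρ p) w := by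
  have hdist := primrec_endpointDist_wordEdge hsurj heq
  have hedge : PrimrecRel fun q p : List A × A =>
      IsDegenerate ρ ι (shortlexNF ρ) (wordEdge ρ q) ∨
        endpointDist ρ (wordEdge ρ q) < endpointDist ρ (wordEdge ρ p) :=
    ((primrecPred_isDegenerate_wordEdge hsurj heq).comp Primrec.fst).or
      (Primrec.nat_lt.comp (hdist.comp Primrec.fst) (hdist.comp Primrec.snd))
  have hpath := hedge.forall_mem_list.comp
    (primrec_pathEdges.comp (Primrec.fst.comp Primrec.snd) Primrec.fst)
    (Primrec.snd (α := List A) (β := List A × A))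
  have heval := heq.comp (Primrec.fst (α := List A) (β := List A × A))
    (Primrec.list_cons.comp (Primrec.snd.comp Primrec.snd) (Primrec.const []))
  refine (heval.and hpath).of_eq fun ⟨w, p⟩ => ?_
  simp only [IsStackingWord, edgeOnPath_iff_exists_mem_pathEdges, wordEdge, eval_cons, eval_nil,
    mul_one, forall_exists_index, and_imp, forall_apply_eq_imp_iff₂]

end Computability

section StackingMap

variable {ρ : A → G} {ι : A → A} {K : ℕ}

theorem edgeDist_lt_of_transGen_flowPrec {C : Set (List A)} {lt : G × A → G × A → Prop}
    {Φ : G × A → List A} (hlt : ∀ e' e, lt e' e → edgeDist ρ e' < edgeDist ρ e)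
    (hΦ : IsStackingMap ρ ι C lt K Φ) {e' e : G × A}
    (h : Relation.TransGen (FlowPrec ρ ι C Φ) e' e) : edgeDist ρ e' < edgeDist ρ e := by
  have hstep : ∀ e' e, FlowPrec ρ ι C Φ e' e → edgeDist ρ e' < edgeDist ρ e :=
    fun e' e ⟨he, he', hpath⟩ => hlt e' e (((hΦ e he).2.2 e' hpath).resolve_left he')
  induction h with
  | single h => exact hstep _ _ h
  | tail _ h ih => exact ih.trans (hstep _ _ h)

variable [LinearOrder A]

/-- The order on recursive edges given by the distance to the identity. -/
def stackingOrder (ρ : A → G) (ι : A → A) (e' e : G × A) : Prop :=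
  IsRecursive ρ ι (shortlexNF ρ) e' ∧ IsRecursive ρ ι (shortlexNF ρ) e ∧
    endpointDist ρ e' < endpointDist ρ e

theorem stackingOrder.edgeDist_lt {e' e : G × A} (h : stackingOrder ρ ι e' e) :
    edgeDist ρ e' < edgeDist ρ e :=
  edgeDist_lt_edgeDist_iff.2 h.2.2

theorem wellFounded_stackingOrder (ρ : A → G) (ι : A → A) : WellFounded (stackingOrder ρ ι) :=
  Subrelation.wf (fun h => h.2.2) (measure (endpointDist ρ)).wf

theorem IsStackingWord.isDegenerate_or_stackingOrder {e : G × A} {w : List A}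
    (hw : IsStackingWord ρ ι e w) (he : IsRecursive ρ ι (shortlexNF ρ) e) {e' : G × A}
    (he' : EdgeOnPath ρ e.1 w e') :
    IsDegenerate ρ ι (shortlexNF ρ) e' ∨ stackingOrder ρ ι e' e := by
  by_cases hdeg : IsDegenerate ρ ι (shortlexNF ρ) e'
  · exact .inl hdeg
  · exact .inr ⟨hdeg, he, (hw.2 e' he').resolve_left hdeg⟩

theorem HasBoundedStackingWords.isStackableStructure [WellFoundedLT A]
    (hstack : HasBoundedStackingWords ρ ι K) (hsurj : Function.Surjective (eval ρ)) (hK : 1 ≤ K) :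
    IsStackableStructure ρ ι (shortlexNF ρ) (stackingOrder ρ ι) K := by
  refine ⟨nil_mem_shortlexNF ρ, isNormalFormSet_shortlexNF hsurj, fun _ _ h => ⟨h.1, h.2.1⟩,
    fun _ _ _ h h' => ⟨h.1, h'.2.1, h.2.2.trans h'.2.2⟩, wellFounded_stackingOrder ρ ι,
    fun g a => ?_⟩
  by_cases hdeg : IsDegenerate ρ ι (shortlexNF ρ) (g, a)
  · refine ⟨[a], hK, by simp, fun e' he' => .inl ?_⟩
    rwa [edgeOnPath_singleton.1 he']
  · obtain ⟨w, hwK, hw⟩ := hstack (g, a)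
    exact ⟨w, hwK, hw.1, fun _ => hw.isDegenerate_or_stackingOrder hdeg⟩

variable [Fintype A]

open Classical in
/-- The extended stacking map sending a recursive edge to its shortlex least stacking word of
length at most `K`. -/
noncomputable def stackingMap (ρ : A → G) (ι : A → A) (K : ℕ) (e : G × A) : List A :=
  if IsDegenerate ρ ι (shortlexNF ρ) e then [e.2] else firstWord K (IsStackingWord ρ ι e)

theorem HasBoundedStackingWords.isExtendedStackingMap (hstack : HasBoundedStackingWords ρ ι K) :
    IsExtendedStackingMap ρ ι (shortlexNF ρ) (stackingOrder ρ ι) K (stackingMap ρ ι K) := by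
  refine ⟨fun e he => if_pos he, fun e he => ?_⟩
  obtain ⟨hlength, hword, -⟩ := firstWord_spec (hstack e)
  rw [stackingMap, if_neg he]
  exact ⟨hword.1, hlength, fun _ => hword.isDegenerate_or_stackingOrder he⟩

theorem primrec_stackingMap_wordEdge [Primcodable A] (hsurj : Function.Surjective (eval ρ))
    (heq : PrimrecRel fun u v : List A => eval ρ u = eval ρ v) :
    Primrec fun p => stackingMap ρ ι K (wordEdge ρ p) := by
  classical
  exact Primrec.ite (primrecPred_isDegenerate_wordEdge hsurj heq)
    (Primrec.list_cons.comp Primrec.snd (Primrec.const []))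
    (primrec_firstWord (primrecRel_isStackingWord hsurj heq) (Primrec.const K))

end StackingMap

/-- an almost convex pair `(G, A)` is geodesically stackable with respect
to the shortlex normal forms, with an algorithmic (extended) stacking map. -/
theorem geodesically_algorithmically_stackable_of_almostConvex {G : Type*} [Group G]
    {A : Type*} [Fintype A] [LinearOrder A]
    (ρ : A → G) (ι : A → A)
    (hgen : Subgroup.closure (Set.range ρ) = ⊤)
    (hne : ∀ a : A, ρ a ≠ 1)
    (hinv : Function.Involutive ι)
    (hρι : ∀ a : A, ρ (ι a) = (ρ a)⁻¹)
    (hAC : IsAlmostConvex ρ) :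
    ∃ (lt : G × A → G × A → Prop) (k : ℕ) (Φ : G × A → List A),
      IsStackableStructure ρ ι (shortlexNF ρ) lt k ∧
      IsExtendedStackingMap ρ ι (shortlexNF ρ) lt k Φ ∧
      (∀ w ∈ shortlexNF ρ, w.length = wlen ρ (eval ρ w)) ∧
      (∀ e' e : G × A, Relation.TransGen (FlowPrec ρ ι (shortlexNF ρ) Φ) e' e →
        edgeDist ρ e' < edgeDist ρ e) ∧
      ComputablePred (fun x : List A × A × List A =>
        x.2.2 = Φ (eval ρ x.1, x.2.1)) := by
  obtain ⟨k, hk : AlmostConvexWith ρ k⟩ := hAC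
  have hsurj := eval_surjective hgen hρι
  have hstack : HasBoundedStackingWords ρ ι (k + 2) :=
    (hk.hasBoundedStackingWords hsurj hinv hρι).mono (by lia)
  have hΦ := hstack.isExtendedStackingMap
  have heq := hstack.primrecRel_eval_eq hsurj hρι (by lia)
  have hmap : Primrec fun x : List A × A × List A =>
      stackingMap ρ ι (k + 2) (wordEdge ρ (x.1, x.2.1)) :=
    (primrec_stackingMap_wordEdge hsurj heq).comp
      (Primrec.fst.pair (Primrec.fst.comp Primrec.snd))
  exact ⟨stackingOrder ρ ι, k + 2, stackingMap ρ ι (k + 2),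
    hstack.isStackableStructure hsurj (by lia), hΦ,
    fun _ => length_eq_wlen_of_mem_shortlexNF,
    fun _ _ => edgeDist_lt_of_transGen_flowPrec (fun _ _ => stackingOrder.edgeDist_lt) hΦ.2,
    (Primrec.eq.comp (Primrec.snd.comp Primrec.snd) hmap).computablePred⟩

end Stk
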